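/- Let L > 0 and let P₁, P₂ be finite subsets of the lattice (2π/L)ℤ³; set N = max(|P₁|, |P₂|). Define γ_σ: ℝ³ → ℂ by γ_σ(x) = L^{-3} Σ_{k ∈ P_σ} e^{i k·x} for σ = 1, 2. Let g: ℝ³ → ℂ be measurable and L-periodic in each coordinate with ‖g‖₁ := ∫_{[0,L]³} |g| dx < ∞. Let k ≥ 1 be an integer and let π, τ be permutations of {1, …, k+1} such that the graph on the vertex set {1, …, k+1} × {1, 2}, whose edges are { (j,1), (j,2) } for 2 ≤ j ≤ k+1, together with { (j,1), (π(j),1) } for every j with π(j) ≠ j and { (j,2), (τ(j),2) } for every j with τ(j) ≠ j, is connected. Then for all x₁, y₁ ∈ ℝ³: | ∫_{([0,L]³)^{2k}} Π_{i=1}^{k+1} γ₁(x_i − x_{π(i)}) · Π_{j=1}^{k+1} γ₂(y_j − y_{τ(j)}) · Π_{j=2}^{k+1} g(x_j − y_j) dx₂ ⋯ dx_{k+1} dy₂ ⋯ dy_{k+1} | ≤ (N/L³)² (N ‖g‖₁ / L³)^k. -/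

import Mathlib

open MeasureTheory

noncomputable section

/-- The one-particle density matrix kernel `γ(x) = L⁻³ Σ_{k ∈ P} e^{i k·x}` of a Slater
determinant with momenta `P`. -/
def gam (L : ℝ) (P : Finset (Fin 3 → ℝ)) (x : Fin 3 → ℝ) : ℂ :=
  ((L : ℂ) ^ 3)⁻¹ * ∑ p ∈ P, Complex.exp (Complex.I * ((∑ j : Fin 3, p j * x j : ℝ) : ℂ))

/-- The box `[0,L]³`. -/
def box (L : ℝ) : Set (Fin 3 → ℝ) := Set.univ.pi fun _ => Set.Icc (0 : ℝ) L

/-- The graph of a type-(B2) diagram `(π, τ, G)`: vertices `(j, c)` with `j ∈ {1,…,k+1}`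
(indexed by `Fin (k+1)`, `0` corresponding to the external index `1`) and colour `c`;
edges `{(j,1),(j,2)}` for `j ≠ 0`, `{(j,1),(π j,1)}` for `π j ≠ j` and `{(j,2),(τ j,2)}`
for `τ j ≠ j`. -/
def diagramGraph (k : ℕ) (π τ : Equiv.Perm (Fin (k + 1))) :
    SimpleGraph (Fin (k + 1) × Bool) :=
  SimpleGraph.fromRel fun u v =>
    (u.1 = v.1 ∧ u.1 ≠ 0) ∨
    (u.2 = false ∧ v.2 = false ∧ v.1 = π u.1) ∨
    (u.2 = true ∧ v.2 = true ∧ v.1 = τ u.1)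

/-!
Expand the density matrix kernels in plane waves, so that a momentum flows along each arrow of `π`
and `τ`. Integrating over the two endpoints of an interaction edge gives zero unless momentum is
conserved there, and otherwise a factor of modulus at most `L³ ‖g‖₁`. Since a linked diagram has a
spanning tree of arrows directed towards the external index, momentum conservation determines the
`k` momenta on the tree from the `k + 2` remaining ones, so at most `N ^ (k + 2)` of the terms,
each carrying the prefactor `L⁻³` to the power `2 (k + 1)`, are nonzero.
-/

section Counting

theorem exists_rank_of_reflTransGen {α : Type*} {r : α → α → Prop} {o : α}
    (h : ∀ a, Relation.ReflTransGen r a o) :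
    ∃ d : α → ℕ, ∀ a, a ≠ o → ∃ b, r a b ∧ d b < d a := by
  classical
  let level (n : ℕ) : Set α := (fun S ↦ {a | ∃ b ∈ S, r a b})^[n] {o}
  have level_succ (n : ℕ) : level (n + 1) = {a | ∃ b ∈ level n, r a b} :=
    Function.iterate_succ_apply' ..
  have exists_level (a : α) : ∃ n, a ∈ level n := by
    induction h a using Relation.ReflTransGen.head_induction_on with
    | refl => exact ⟨0, rfl⟩
    | head hab _ ih =>
      obtain ⟨n, hn⟩ := ih
      exact ⟨n + 1, by rw [level_succ]; exact ⟨_, hn, hab⟩⟩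
  refine ⟨fun a ↦ Nat.find (exists_level a), fun a ha ↦ ?_⟩
  have ha_level := Nat.find_spec (exists_level a)
  obtain ⟨n, hn⟩ : ∃ n, Nat.find (exists_level a) = n + 1 :=
    Nat.exists_eq_succ_of_ne_zero fun h0 ↦ ha (by rwa [h0] at ha_level)
  rw [hn, level_succ] at ha_level
  obtain ⟨b, hb, hab⟩ := ha_level
  exact ⟨b, hab, (Nat.lt_succ_of_le (Nat.find_min' _ hb)).trans_eq hn.symm⟩

variable {I A : Type*}

theorem reflTransGen_apply_of_perm [Finite I] {r : I → I → Prop} {o : I} {σ : Equiv.Perm I}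
    (hr : ∀ i, r i (σ i)) {i : I} (hi : Relation.ReflTransGen r i o) :
    Relation.ReflTransGen r (σ i) o := by
  have maps_symm : Set.MapsTo σ.symm {i | Relation.ReflTransGen r i o}
      {i | Relation.ReflTransGen r i o} := fun j hj ↦
    .head (by simpa using hr (σ.symm j)) hj
  exact Equiv.Perm.perm_symm_mapsTo_iff_mapsTo.1 maps_symm hi

open Classical in
/-- The momentum assignments of a diagram: `s.1 j` flows along the arrow `j → π j` and `s.2 j`
along `j → τ j`, with values in `P₁` and `P₂`, and outflow equals inflow at every index other than
the external index `o`. Momenta are written multiplicatively since they are used as characters. -/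
def conservingMomenta [Fintype I] [DecidableEq I] [CommMonoid A] (π τ : Equiv.Perm I) (o : I)
    (P₁ P₂ : Finset A) : Finset ((I → A) × (I → A)) :=
  {s ∈ (Fintype.piFinset fun _ ↦ P₁) ×ˢ (Fintype.piFinset fun _ ↦ P₂) |
    ∀ j, j ≠ o → s.1 j * s.2 j = s.1 (π.symm j) * s.2 (τ.symm j)}

theorem mem_conservingMomenta [Fintype I] [DecidableEq I] [CommMonoid A] {π τ : Equiv.Perm I}
    {o : I} {P₁ P₂ : Finset A} {s : (I → A) × (I → A)} :
    s ∈ conservingMomenta π τ o P₁ P₂ ↔ ((∀ i, s.1 i ∈ P₁) ∧ ∀ i, s.2 i ∈ P₂) ∧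
      ∀ j, j ≠ o → s.1 j * s.2 j = s.1 (π.symm j) * s.2 (τ.symm j) := by
  simp only [conservingMomenta, Finset.mem_filter, Finset.mem_product, Fintype.mem_piFinset]

theorem exists_spanning_arrows {π τ : Equiv.Perm I} {o : I}
    (h : ∀ i, Relation.ReflTransGen (fun i j ↦ j = π i ∨ j = τ i) i o) :
    ∃ (d : I → ℕ) (c : I → Bool), c o = true ∧
      ∀ i, i ≠ o → d (if c i then τ i else π i) < d i := by
  classical
  obtain ⟨d, hd⟩ := exists_rank_of_reflTransGen h
  refine ⟨d, fun i ↦ decide (i = o ∨ d (τ i) < d i), by simp, fun i hi ↦ ?_⟩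
  obtain ⟨_, rfl | rfl, hlt⟩ := hd i hi
  · by_cases hτ : d (τ i) < d i <;> simp [hi, hτ, hlt]
  · simp [hlt]

/-- Momentum is propagated from the leaves of the spanning tree towards its root `o`: at an index
whose incoming momenta agree, so do the outgoing ones. -/
theorem eq_of_conserving_of_eq_off_tree [Finite I] [CancelCommMonoid A] {π τ : Equiv.Perm I} {o : I}
    {d : I → ℕ} {c : I → Bool} (hc : c o = true)
    (hd : ∀ i, i ≠ o → d (if c i then τ i else π i) < d i) {s t : (I → A) × (I → A)}
    (hs : ∀ j, j ≠ o → s.1 j * s.2 j = s.1 (π.symm j) * s.2 (τ.symm j))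
    (ht : ∀ j, j ≠ o → t.1 j * t.2 j = t.1 (π.symm j) * t.2 (τ.symm j))
    (h_root : s.2 o = t.2 o)
    (h_off : ∀ i, (if c i then s.1 i else s.2 i) = if c i then t.1 i else t.2 i) : s = t := by
  have off_fst {i : I} (hi : c i = true) : s.1 i = t.1 i := by simpa [hi] using h_off i
  have off_snd {i : I} (hi : ¬ c i = true) : s.2 i = t.2 i := by simpa [hi] using h_off i
  suffices agree : ∀ j, s.1 j = t.1 j ∧ s.2 j = t.2 j from
    Prod.ext (funext fun j ↦ (agree j).1) (funext fun j ↦ (agree j).2)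
  have wf : WellFounded fun i j ↦ d j < d i :=
    @Finite.wellFounded_of_trans_of_irrefl _ _ _ ⟨fun _ _ _ hij hjk ↦ hjk.trans hij⟩
      ⟨fun _ ↦ lt_irrefl _⟩
  intro j
  induction j using wf.induction with
  | _ j ih =>
  rcases eq_or_ne j o with rfl | hj
  · exact ⟨off_fst hc, h_root⟩
  have inflow_fst : s.1 (π.symm j) = t.1 (π.symm j) := by
    by_cases hi : c (π.symm j) = true
    · exact off_fst hi
    · have hlt := hd (π.symm j) fun h ↦ hi (h ▸ hc)
      exact (ih _ (by simpa [hi] using hlt)).1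
  have inflow_snd : s.2 (τ.symm j) = t.2 (τ.symm j) := by
    by_cases hi : c (τ.symm j) = true
    · rcases eq_or_ne (τ.symm j) o with ho | ho
      · rw [ho, h_root]
      · exact (ih _ (by simpa [hi] using hd _ ho)).2
    · exact off_snd hi
  have outflow : s.1 j * s.2 j = t.1 j * t.2 j := by
    rw [hs j hj, ht j hj, inflow_fst, inflow_snd]
  by_cases hi : c j = true
  · exact ⟨off_fst hi, mul_left_cancel (off_fst hi ▸ outflow)⟩
  · exact ⟨mul_right_cancel (off_snd hi ▸ outflow), off_snd hi⟩

theorem card_conservingMomenta_le [Fintype I] [DecidableEq I] [CancelCommMonoid A]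
    {π τ : Equiv.Perm I} {o : I}
    (h : ∀ i, Relation.ReflTransGen (fun i j ↦ j = π i ∨ j = τ i) i o) (P₁ P₂ : Finset A) :
    (conservingMomenta π τ o P₁ P₂).card ≤ max P₁.card P₂.card ^ (Fintype.card I + 1) := by
  obtain ⟨d, c, hc, hd⟩ := exists_spanning_arrows h
  let offTree : Finset (A × (I → A)) := P₂ ×ˢ Fintype.piFinset fun i ↦ if c i then P₁ else P₂
  have card_offTree : offTree.card ≤ max P₁.card P₂.card ^ (Fintype.card I + 1) := by
    rw [Finset.card_product, Fintype.card_piFinset, pow_succ']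
    gcongr
    · exact le_max_right _ _
    · refine Finset.prod_le_pow_card _ _ _ fun i _ ↦ ?_
      split_ifs
      · exact le_max_left _ _
      · exact le_max_right _ _
  refine le_trans (Finset.card_le_card_of_injOn
    (fun s ↦ (s.2 o, fun i ↦ if c i then s.1 i else s.2 i)) ?_ ?_) card_offTree
  · intro s hs
    obtain ⟨⟨hs₁, hs₂⟩, -⟩ := mem_conservingMomenta.1 hs
    refine Finset.mem_product.2 ⟨hs₂ o, Fintype.mem_piFinset.2 fun i ↦ ?_⟩
    dsimp only
    split_ifs
    · exact hs₁ i
    · exact hs₂ i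
  · intro s hs t ht hst
    rw [Prod.mk.injEq] at hst
    exact eq_of_conserving_of_eq_off_tree hc hd (mem_conservingMomenta.1 hs).2
      (mem_conservingMomenta.1 ht).2 hst.1 (congrFun hst.2)

theorem reflTransGen_of_diagramGraph_reachable {k : ℕ} {π τ : Equiv.Perm (Fin (k + 1))}
    {c : Bool} {v : Fin (k + 1) × Bool} (h : (diagramGraph k π τ).Reachable (0, c) v) :
    Relation.ReflTransGen (fun i j ↦ j = π i ∨ j = τ i) v.1 0 := by
  rw [SimpleGraph.reachable_iff_reflTransGen] at h
  induction h with
  | refl => exact .refl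
  | tail _ huv ih =>
    obtain ⟨-, (h | h | h) | (h | h | h)⟩ := (SimpleGraph.fromRel_adj ..).1 huv
    · rwa [← h.1]
    · rw [h.2.2]
      exact reflTransGen_apply_of_perm (fun _ ↦ .inl rfl) ih
    · rw [h.2.2]
      exact reflTransGen_apply_of_perm (fun _ ↦ .inr rfl) ih
    · rwa [h.1]
    · exact .head (.inl h.2.2) ih
    · exact .head (.inr h.2.2) ih

theorem card_conservingMomenta_le_of_linked [CancelCommMonoid A] {k : ℕ}
    {π τ : Equiv.Perm (Fin (k + 1))} (hlinked : ∀ v, ∃ c, (diagramGraph k π τ).Reachable (0, c) v)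
    (P₁ P₂ : Finset A) :
    (conservingMomenta π τ 0 P₁ P₂).card ≤ max P₁.card P₂.card ^ (k + 2) := by
  have reaches_root (i : Fin (k + 1)) :
      Relation.ReflTransGen (fun i j ↦ j = π i ∨ j = τ i) i 0 :=
    reflTransGen_of_diagramGraph_reachable (hlinked (i, false)).choose_spec
  simpa only [Fintype.card_fin] using card_conservingMomenta_le reaches_root P₁ P₂

end Counting

section PeriodicFunctions

variable {E F : Type*} [AddCommGroup E] {Γ : AddSubgroup E} {f : E → F}

theorem sub_vadd_eq_of_periodic (hf : ∀ γ ∈ Γ, Function.Periodic f γ) (v : E) (γ : Γ) (x : E) :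
    f ((γ +ᵥ x) - v) = f (x - v) := by
  rw [AddSubgroup.vadd_def, vadd_eq_add, add_comm, add_sub_right_comm, hf γ γ.2]

variable [MeasurableSpace E] {μ : Measure E} {D : Set E} [μ.IsAddLeftInvariant]

section Translation

variable [MeasurableAdd E]

open scoped Pointwise in
theorem isAddFundamentalDomain_preimage_sub (hD : IsAddFundamentalDomain Γ D μ) (v : E) :
    IsAddFundamentalDomain Γ ((· - v) ⁻¹' D) μ := by
  have translate : (· - v) ⁻¹' D = v +ᵥ D := by
    ext x
    rw [Set.mem_vadd_set_iff_neg_vadd_mem, Set.mem_preimage, vadd_eq_add, neg_add_eq_sub]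
  rw [translate]
  exact hD.vadd_of_comm v

variable [Countable Γ]

theorem setIntegral_sub_right_of_periodic [NormedAddCommGroup F] [NormedSpace ℝ F]
    (hD : IsAddFundamentalDomain Γ D μ) (hf : ∀ γ ∈ Γ, Function.Periodic f γ) (v : E) :
    ∫ x in D, f (x - v) ∂μ = ∫ x in D, f x ∂μ := by
  rw [hD.setIntegral_eq (isAddFundamentalDomain_preimage_sub hD v) (sub_vadd_eq_of_periodic hf v)]
  exact (measurePreserving_sub_right μ v).setIntegral_preimage_emb
    (MeasurableEquiv.subRight v).measurableEmbedding f D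

theorem integrableOn_sub_right_of_periodic [NormedAddCommGroup F]
    (hD : IsAddFundamentalDomain Γ D μ) (hf : ∀ γ ∈ Γ, Function.Periodic f γ)
    (hf_int : IntegrableOn f D μ) (v : E) : IntegrableOn (fun x ↦ f (x - v)) D μ := by
  rw [hD.integrableOn_iff (isAddFundamentalDomain_preimage_sub hD v) (sub_vadd_eq_of_periodic hf v)]
  exact ((measurePreserving_sub_right μ v).integrableOn_comp_preimage
    (MeasurableEquiv.subRight v).measurableEmbedding).2 hf_int

theorem aestronglyMeasurable_of_periodic [TopologicalSpace F]
    [TopologicalSpace.PseudoMetrizableSpace F] (hD : IsAddFundamentalDomain Γ D μ)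
    (hf : ∀ γ ∈ Γ, Function.Periodic f γ)
    (hf_meas : AEStronglyMeasurable f (μ.restrict D)) : AEStronglyMeasurable f μ := by
  rw [← hD.sum_restrict, aestronglyMeasurable_sum_measure_iff]
  intro γ
  exact (hD.aestronglyMeasurable_on_iff (hD.vadd γ) fun γ x ↦ by
    simpa using sub_vadd_eq_of_periodic hf 0 γ x).1 hf_meas

end Translation

theorem integrable_sub_of_periodic [Countable Γ] [MeasurableAdd₂ E] [MeasurableNeg E] [SFinite μ]
    [NormedAddCommGroup F] (hD : IsAddFundamentalDomain Γ D μ) (hD_fin : μ D ≠ ⊤)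
    (hf : ∀ γ ∈ Γ, Function.Periodic f γ) (hf_int : IntegrableOn f D μ) :
    Integrable (fun z : E × E ↦ f (z.1 - z.2)) ((μ.restrict D).prod (μ.restrict D)) := by
  have : IsFiniteMeasure (μ.restrict D) := isFiniteMeasure_restrict.2 hD_fin
  have meas : AEStronglyMeasurable (fun z : E × E ↦ f (z.1 - z.2))
      ((μ.restrict D).prod (μ.restrict D)) := by
    rw [Measure.prod_restrict]
    exact ((aestronglyMeasurable_of_periodic hD hf hf_int.1).comp_quasiMeasurePreserving
      (quasiMeasurePreserving_sub μ μ)).restrict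
  have norm_shift (y : E) : ∫ x in D, ‖f (x - y)‖ ∂μ = ∫ x in D, ‖f x‖ ∂μ :=
    setIntegral_sub_right_of_periodic (f := fun x ↦ ‖f x‖) hD
      (fun γ hγ x ↦ congrArg norm (hf γ hγ x)) y
  rw [integrable_prod_iff' meas]
  simp only [norm_shift]
  exact ⟨.of_forall fun y ↦ integrableOn_sub_right_of_periodic hD hf hf_int y, integrable_const _⟩

end PeriodicFunctions

section Characters

variable {E : Type*} [AddCommGroup E] [MeasurableSpace E] {μ : Measure E} {Γ : AddSubgroup E}
  {D : Set E} {χ ψ : AddChar E Circle} {g : E → ℂ}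

/-- The dual lattice of `Γ`: the measurable unitary characters of `E` that are trivial on `Γ`.
For `Γ = L ℤ³` in `ℝ³` these are the plane waves with momenta in `(2π/L) ℤ³`. -/
def dualLattice (Γ : AddSubgroup E) : Subgroup (AddChar E Circle) where
  carrier := {χ | Measurable (fun x ↦ (χ x : ℂ)) ∧ ∀ γ ∈ Γ, χ γ = 1}
  mul_mem' := fun ⟨hχ, hχΓ⟩ ⟨hψ, hψΓ⟩ ↦ ⟨hχ.mul hψ, fun γ hγ ↦ by
    rw [AddChar.mul_apply, hχΓ γ hγ, hψΓ γ hγ, mul_one]⟩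
  one_mem' := ⟨by simp, fun _ _ ↦ rfl⟩
  inv_mem' := fun ⟨hχ, hχΓ⟩ ↦
    ⟨by simpa only [AddChar.inv_apply', Circle.coe_inv] using! hχ.inv, fun γ hγ ↦ by
      rw [AddChar.inv_apply', hχΓ γ hγ, inv_one]⟩

theorem periodic_of_mem_dualLattice (hχ : χ ∈ dualLattice Γ) :
    ∀ γ ∈ Γ, Function.Periodic χ γ := fun γ hγ x ↦ by
  rw [AddChar.map_add_eq_mul, hχ.2 γ hγ, mul_one]

/-- A pair of vertices joined by an interaction edge `g`, with net momenta `χ` and `ψ`. -/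
def pairFactor (g : E → ℂ) (χ ψ : AddChar E Circle) (z : E × E) : ℂ :=
  χ z.1 * ψ z.2 * g (z.1 - z.2)

variable [Countable Γ] [μ.IsAddLeftInvariant]

theorem setIntegral_eq_zero_of_mem_dualLattice [MeasurableAdd E] (hD : IsAddFundamentalDomain Γ D μ)
    (hχ : χ ∈ dualLattice Γ) (hχ_ne : χ ≠ 1) :
    ∫ x in D, (χ x : ℂ) ∂μ = 0 := by
  obtain ⟨v, hv⟩ := AddChar.ne_one_iff.1 hχ_ne
  have shift := setIntegral_sub_right_of_periodic (f := fun x ↦ (χ x : ℂ)) hD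
    (fun γ hγ x ↦ congrArg _ (periodic_of_mem_dualLattice hχ γ hγ x)) (-v)
  simp only [sub_neg_eq_add, AddChar.map_add_eq_mul, Circle.coe_mul, integral_mul_const] at shift
  exact (mul_right_eq_self₀.1 shift).resolve_left (by simpa [Circle.coe_eq_one] using hv)

variable [MeasurableAdd₂ E] [MeasurableNeg E] [SFinite μ]

theorem integrable_pairFactor (hD : IsAddFundamentalDomain Γ D μ) (hD_fin : μ D ≠ ⊤)
    (hχ : χ ∈ dualLattice Γ) (hψ : ψ ∈ dualLattice Γ)
    (hg : ∀ γ ∈ Γ, Function.Periodic g γ) (hg_int : IntegrableOn g D μ) :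
    Integrable (pairFactor g χ ψ) ((μ.restrict D).prod (μ.restrict D)) :=
  (integrable_sub_of_periodic hD hD_fin hg hg_int).bdd_mul (c := 1)
    ((hχ.1.comp measurable_fst).mul (hψ.1.comp measurable_snd)).aestronglyMeasurable
    (.of_forall fun z ↦ by simp [Circle.norm_coe])

theorem integral_pairFactor (hD : IsAddFundamentalDomain Γ D μ) (hD_fin : μ D ≠ ⊤)
    (hχ : χ ∈ dualLattice Γ) (hψ : ψ ∈ dualLattice Γ)
    (hg : ∀ γ ∈ Γ, Function.Periodic g γ) (hg_int : IntegrableOn g D μ) :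
    ∫ z, pairFactor g χ ψ z ∂(μ.restrict D).prod (μ.restrict D) =
      (∫ y in D, ((χ * ψ) y : ℂ) ∂μ) * ∫ x in D, χ x * g x ∂μ := by
  rw [integral_prod_symm _ (integrable_pairFactor hD hD_fin hχ hψ hg hg_int),
    ← integral_mul_const]
  congr 1 with y
  have periodic : ∀ γ ∈ Γ, Function.Periodic (fun x ↦ (χ x : ℂ) * g x) γ := fun γ hγ x ↦ by
    simp only [periodic_of_mem_dualLattice hχ γ hγ x, hg γ hγ x]
  rw [← setIntegral_sub_right_of_periodic hD periodic y, ← integral_const_mul]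
  congr 1 with x
  have split : χ x = χ (x - y) * χ y := by rw [← AddChar.map_add_eq_mul, sub_add_cancel]
  rw [pairFactor, split, AddChar.mul_apply, Circle.coe_mul, Circle.coe_mul]
  ring

theorem integral_pairFactor_eq_zero (hD : IsAddFundamentalDomain Γ D μ) (hD_fin : μ D ≠ ⊤)
    (hχ : χ ∈ dualLattice Γ) (hψ : ψ ∈ dualLattice Γ)
    (hg : ∀ γ ∈ Γ, Function.Periodic g γ) (hg_int : IntegrableOn g D μ) (hχψ : χ * ψ ≠ 1) :
    ∫ z, pairFactor g χ ψ z ∂(μ.restrict D).prod (μ.restrict D) = 0 := by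
  rw [integral_pairFactor hD hD_fin hχ hψ hg hg_int,
    setIntegral_eq_zero_of_mem_dualLattice hD (mul_mem hχ hψ) hχψ, zero_mul]

theorem norm_integral_pairFactor_le (hD : IsAddFundamentalDomain Γ D μ) (hD_fin : μ D ≠ ⊤)
    (hχ : χ ∈ dualLattice Γ) (hψ : ψ ∈ dualLattice Γ)
    (hg : ∀ γ ∈ Γ, Function.Periodic g γ) (hg_int : IntegrableOn g D μ) :
    ‖∫ z, pairFactor g χ ψ z ∂(μ.restrict D).prod (μ.restrict D)‖ ≤
      μ.real D * ∫ x in D, ‖g x‖ ∂μ := by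
  rw [integral_pairFactor hD hD_fin hχ hψ hg hg_int, norm_mul]
  gcongr
  · simpa using norm_setIntegral_le_of_norm_le_const (C := 1) hD_fin.lt_top
      fun x _ ↦ (Circle.norm_coe ((χ * ψ) x)).le
  · simpa [Circle.norm_coe] using
      norm_integral_le_integral_norm (μ := μ.restrict D) fun x ↦ (χ x : ℂ) * g x

end Characters

section ProductMeasures

variable {ι 𝕜 : Type*} [Fintype ι] [RCLike 𝕜] {α β : Type*} [MeasurableSpace α] [MeasurableSpace β]
  (μ : ι → Measure α) (ν : ι → Measure β) [∀ i, SigmaFinite (μ i)] [∀ i, SigmaFinite (ν i)]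
  (f : ι → α × β → 𝕜)

theorem integral_prod_pi_fintype_prod :
    ∫ w : (ι → α) × (ι → β), ∏ i, f i (w.1 i, w.2 i) ∂(Measure.pi μ).prod (Measure.pi ν) =
      ∏ i, ∫ z, f i z ∂(μ i).prod (ν i) := by
  rw [← (measurePreserving_arrowProdEquivProdArrow α β ι μ ν).integral_comp']
  exact integral_fintype_prod_eq_prod f

variable {μ ν f} in
theorem integrable_prod_pi_fintype_prod (hf : ∀ i, Integrable (f i) ((μ i).prod (ν i))) :
    Integrable (fun w : (ι → α) × (ι → β) ↦ ∏ i, f i (w.1 i, w.2 i))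
      ((Measure.pi μ).prod (Measure.pi ν)) := by
  rw [← (measurePreserving_arrowProdEquivProdArrow α β ι μ ν).integrable_comp_emb
    (MeasurableEquiv.measurableEmbedding _)]
  exact Integrable.fintype_prod hf

end ProductMeasures

section Diagrams

variable {I E : Type*} [AddCommGroup E]

/-- The one-particle density matrix kernel `γ(x) = V⁻¹ ∑_{χ ∈ P} χ(x)` of a Slater determinant with
momenta `P` in a volume `V`. -/
def densityKernel (V : ℝ) (P : Finset (AddChar E Circle)) (x : E) : ℂ :=
  (V : ℂ)⁻¹ * ∑ χ ∈ P, (χ x : ℂ)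

/-- The momentum leaving the vertex `i` minus the momentum entering it, written multiplicatively,
when `p j` flows along the arrow `j → σ j`. -/
def netMomentum {A : Type*} [Div A] (σ : Equiv.Perm I) (p : I → A) (i : I) : A :=
  p i / p (σ.symm i)

theorem netMomentum_mul_eq_one_iff {A : Type*} [CommGroup A] {π τ : Equiv.Perm I} {p q : I → A}
    {i : I} : netMomentum π p i * netMomentum τ q i = 1 ↔
      p i * q i = p (π.symm i) * q (τ.symm i) := by
  rw [netMomentum, netMomentum, div_mul_div_comm, div_eq_one]

theorem netMomentum_mem_dualLattice [MeasurableSpace E] {Γ : AddSubgroup E} {σ : Equiv.Perm I}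
    {p : I → AddChar E Circle} (hp : ∀ i, p i ∈ dualLattice Γ) (i : I) :
    netMomentum σ p i ∈ dualLattice Γ :=
  div_mem (hp i) (hp _)

section Expansion

variable [Fintype I] (π τ σ : Equiv.Perm I)

theorem prod_addChar_sub {M : Type*} [CommGroup M] (p : I → AddChar E M) (X : I → E) :
    ∏ i, p i (X i - X (σ i)) = ∏ i, netMomentum σ p i (X i) := by
  have reindex : ∏ i, p i (X (σ i)) = ∏ i, p (σ.symm i) (X i) := by
    rw [← Equiv.prod_comp σ fun i ↦ p (σ.symm i) (X i)]
    simp only [Equiv.symm_apply_apply]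
  simp only [AddChar.map_sub_eq_div, netMomentum, AddChar.div_apply', Finset.prod_div_distrib,
    reindex]

variable [DecidableEq I] (V : ℝ)

theorem prod_densityKernel (P : Finset (AddChar E Circle)) (X : I → E) :
    ∏ i, densityKernel V P (X i - X (σ i)) = (V : ℂ)⁻¹ ^ Fintype.card I *
      ∑ p ∈ Fintype.piFinset fun _ ↦ P, ∏ i, (netMomentum σ p i (X i) : ℂ) := by
  have push_coe (z : I → Circle) : ((∏ i, z i : Circle) : ℂ) = ∏ i, (z i : ℂ) :=
    map_prod Circle.coeHom z _
  simp only [densityKernel, Finset.prod_mul_distrib, Finset.prod_const, Finset.card_univ,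
    Finset.prod_univ_sum, ← push_coe, prod_addChar_sub]

theorem prod_densityKernel_mul_prod_densityKernel (P₁ P₂ : Finset (AddChar E Circle))
    (X Y : I → E) :
    (∏ i, densityKernel V P₁ (X i - X (π i))) * ∏ i, densityKernel V P₂ (Y i - Y (τ i)) =
      ((V : ℂ)⁻¹ ^ Fintype.card I) ^ 2 *
        ∑ s ∈ (Fintype.piFinset fun _ ↦ P₁) ×ˢ (Fintype.piFinset fun _ ↦ P₂),
          ∏ i, ((netMomentum π s.1 i (X i) : ℂ) * netMomentum τ s.2 i (Y i)) := by
  rw [prod_densityKernel, prod_densityKernel, mul_mul_mul_comm, ← sq, Finset.sum_mul_sum,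
    ← Finset.sum_product']
  simp only [Finset.prod_mul_distrib]

end Expansion

variable {k : ℕ} {π τ : Equiv.Perm (Fin (k + 1))} {g : E → ℂ} {x₁ y₁ : E}
  {s : (Fin (k + 1) → AddChar E Circle) × (Fin (k + 1) → AddChar E Circle)}

/-- The contribution of a single momentum assignment `s` to the integrand of the diagram `(π, τ)`,
up to powers of the volume; the external index is `0`. -/
def diagramTerm (π τ : Equiv.Perm (Fin (k + 1))) (g : E → ℂ) (x₁ y₁ : E)
    (s : (Fin (k + 1) → AddChar E Circle) × (Fin (k + 1) → AddChar E Circle))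
    (w : (Fin k → E) × (Fin k → E)) : ℂ :=
  netMomentum π s.1 0 x₁ * netMomentum τ s.2 0 y₁ *
    ∏ j : Fin k, pairFactor g (netMomentum π s.1 j.succ) (netMomentum τ s.2 j.succ) (w.1 j, w.2 j)

variable (π τ g x₁ y₁) in
theorem diagramIntegrand_eq_sum (V : ℝ) (P₁ P₂ : Finset (AddChar E Circle))
    (w : (Fin k → E) × (Fin k → E)) :
    (∏ i : Fin (k + 1), densityKernel V P₁ (Fin.cases x₁ w.1 i - Fin.cases x₁ w.1 (π i))) *
        (∏ j : Fin (k + 1), densityKernel V P₂ (Fin.cases y₁ w.2 j - Fin.cases y₁ w.2 (τ j))) *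
        (∏ j : Fin k, g (w.1 j - w.2 j)) =
      ((V : ℂ)⁻¹ ^ (k + 1)) ^ 2 *
        ∑ s ∈ (Fintype.piFinset fun _ ↦ P₁) ×ˢ (Fintype.piFinset fun _ ↦ P₂),
          diagramTerm π τ g x₁ y₁ s w := by
  rw [prod_densityKernel_mul_prod_densityKernel (X := Fin.cases x₁ w.1) (Y := Fin.cases y₁ w.2),
    Fintype.card_fin, mul_assoc, Finset.sum_mul]
  simp only [Fin.prod_univ_succ, Fin.cases_zero, Fin.cases_succ, diagramTerm, pairFactor,
    Finset.prod_mul_distrib]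
  congr! 2
  ring

variable [MeasurableSpace E] {μ : Measure E} {D : Set E} [SigmaFinite μ]

theorem integral_diagramTerm :
    ∫ w, diagramTerm π τ g x₁ y₁ s w
        ∂(Measure.pi fun _ ↦ μ.restrict D).prod (Measure.pi fun _ ↦ μ.restrict D) =
      netMomentum π s.1 0 x₁ * netMomentum τ s.2 0 y₁ *
        ∏ j : Fin k, ∫ z, pairFactor g (netMomentum π s.1 j.succ) (netMomentum τ s.2 j.succ) z
          ∂(μ.restrict D).prod (μ.restrict D) := by
  simp only [diagramTerm]
  rw [integral_const_mul, integral_prod_pi_fintype_prod]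

variable {Γ : AddSubgroup E} [Countable Γ] [μ.IsAddLeftInvariant] [MeasurableAdd₂ E]
  [MeasurableNeg E]

theorem integrable_diagramTerm (hD : IsAddFundamentalDomain Γ D μ) (hD_fin : μ D ≠ ⊤)
    (hg : ∀ γ ∈ Γ, Function.Periodic g γ) (hg_int : IntegrableOn g D μ)
    (hs₁ : ∀ i, s.1 i ∈ dualLattice Γ) (hs₂ : ∀ i, s.2 i ∈ dualLattice Γ) :
    Integrable (diagramTerm π τ g x₁ y₁ s)
      ((Measure.pi fun _ ↦ μ.restrict D).prod (Measure.pi fun _ ↦ μ.restrict D)) :=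
  (integrable_prod_pi_fintype_prod fun _ ↦ integrable_pairFactor hD hD_fin
    (netMomentum_mem_dualLattice hs₁ _) (netMomentum_mem_dualLattice hs₂ _) hg hg_int).const_mul _

theorem integral_diagramTerm_eq_zero (hD : IsAddFundamentalDomain Γ D μ) (hD_fin : μ D ≠ ⊤)
    (hg : ∀ γ ∈ Γ, Function.Periodic g γ) (hg_int : IntegrableOn g D μ)
    (hs₁ : ∀ i, s.1 i ∈ dualLattice Γ) (hs₂ : ∀ i, s.2 i ∈ dualLattice Γ)
    {j : Fin (k + 1)} (hj : j ≠ 0)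
    (hs : s.1 j * s.2 j ≠ s.1 (π.symm j) * s.2 (τ.symm j)) :
    ∫ w, diagramTerm π τ g x₁ y₁ s w
      ∂(Measure.pi fun _ ↦ μ.restrict D).prod (Measure.pi fun _ ↦ μ.restrict D) = 0 := by
  obtain ⟨i, rfl⟩ := Fin.exists_succ_eq.2 hj
  rw [integral_diagramTerm, Finset.prod_eq_zero (Finset.mem_univ i), mul_zero]
  exact integral_pairFactor_eq_zero hD hD_fin (netMomentum_mem_dualLattice hs₁ _)
    (netMomentum_mem_dualLattice hs₂ _) hg hg_int (mt netMomentum_mul_eq_one_iff.1 hs)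

theorem norm_integral_diagramTerm_le (hD : IsAddFundamentalDomain Γ D μ) (hD_fin : μ D ≠ ⊤)
    (hg : ∀ γ ∈ Γ, Function.Periodic g γ) (hg_int : IntegrableOn g D μ)
    (hs₁ : ∀ i, s.1 i ∈ dualLattice Γ) (hs₂ : ∀ i, s.2 i ∈ dualLattice Γ) :
    ‖∫ w, diagramTerm π τ g x₁ y₁ s w
        ∂(Measure.pi fun _ ↦ μ.restrict D).prod (Measure.pi fun _ ↦ μ.restrict D)‖ ≤
      (μ.real D * ∫ x in D, ‖g x‖ ∂μ) ^ k := by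
  rw [integral_diagramTerm, norm_mul, norm_mul, Circle.norm_coe, Circle.norm_coe, one_mul, one_mul,
    norm_prod, ← Fin.prod_const]
  gcongr
  exact norm_integral_pairFactor_le hD hD_fin (netMomentum_mem_dualLattice hs₁ _)
    (netMomentum_mem_dualLattice hs₂ _) hg hg_int

variable {P₁ P₂ : Finset (AddChar E Circle)}

theorem sum_integral_diagramTerm_eq_sum_conservingMomenta (hD : IsAddFundamentalDomain Γ D μ)
    (hD_fin : μ D ≠ ⊤) (hP₁ : ∀ χ ∈ P₁, χ ∈ dualLattice Γ) (hP₂ : ∀ χ ∈ P₂, χ ∈ dualLattice Γ)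
    (hg : ∀ γ ∈ Γ, Function.Periodic g γ) (hg_int : IntegrableOn g D μ) :
    ∑ s ∈ (Fintype.piFinset fun _ ↦ P₁) ×ˢ (Fintype.piFinset fun _ ↦ P₂),
        ∫ w, diagramTerm π τ g x₁ y₁ s w
          ∂(Measure.pi fun _ ↦ μ.restrict D).prod (Measure.pi fun _ ↦ μ.restrict D) =
      ∑ s ∈ conservingMomenta π τ 0 P₁ P₂, ∫ w, diagramTerm π τ g x₁ y₁ s w
          ∂(Measure.pi fun _ ↦ μ.restrict D).prod (Measure.pi fun _ ↦ μ.restrict D) := by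
  refine (Finset.sum_subset (fun s hs ↦ ?_) fun s hs hs_not ↦ ?_).symm
  · simpa using (mem_conservingMomenta.1 hs).1
  · simp only [Finset.mem_product, Fintype.mem_piFinset] at hs
    obtain ⟨j, hj, hne⟩ : ∃ j, j ≠ 0 ∧ s.1 j * s.2 j ≠ s.1 (π.symm j) * s.2 (τ.symm j) := by
      by_contra! h
      exact hs_not (mem_conservingMomenta.2 ⟨hs, h⟩)
    exact integral_diagramTerm_eq_zero hD hD_fin hg hg_int (fun i ↦ hP₁ _ (hs.1 i))
      (fun i ↦ hP₂ _ (hs.2 i)) hj hne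

theorem norm_sum_integral_diagramTerm_le (hD : IsAddFundamentalDomain Γ D μ) (hD_fin : μ D ≠ ⊤)
    (hP₁ : ∀ χ ∈ P₁, χ ∈ dualLattice Γ) (hP₂ : ∀ χ ∈ P₂, χ ∈ dualLattice Γ)
    (hg : ∀ γ ∈ Γ, Function.Periodic g γ) (hg_int : IntegrableOn g D μ)
    (hlinked : ∀ v, ∃ c, (diagramGraph k π τ).Reachable (0, c) v) :
    ‖∑ s ∈ (Fintype.piFinset fun _ ↦ P₁) ×ˢ (Fintype.piFinset fun _ ↦ P₂),
        ∫ w, diagramTerm π τ g x₁ y₁ s w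
          ∂(Measure.pi fun _ ↦ μ.restrict D).prod (Measure.pi fun _ ↦ μ.restrict D)‖ ≤
      (max P₁.card P₂.card : ℝ) ^ (k + 2) * (μ.real D * ∫ x in D, ‖g x‖ ∂μ) ^ k := by
  rw [sum_integral_diagramTerm_eq_sum_conservingMomenta hD hD_fin hP₁ hP₂ hg hg_int]
  calc
    _ ≤ ∑ _s ∈ conservingMomenta π τ 0 P₁ P₂, (μ.real D * ∫ x in D, ‖g x‖ ∂μ) ^ k :=
      norm_sum_le_of_le _ fun s hs ↦
        have hs_mem := (mem_conservingMomenta.1 hs).1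
        norm_integral_diagramTerm_le hD hD_fin hg hg_int (fun i ↦ hP₁ _ (hs_mem.1 i))
          fun i ↦ hP₂ _ (hs_mem.2 i)
    _ = (conservingMomenta π τ 0 P₁ P₂).card * (μ.real D * ∫ x in D, ‖g x‖ ∂μ) ^ k := by
      rw [Finset.sum_const, nsmul_eq_mul]
    _ ≤ (max P₁.card P₂.card : ℝ) ^ (k + 2) * (μ.real D * ∫ x in D, ‖g x‖ ∂μ) ^ k := by
      gcongr
      exact_mod_cast card_conservingMomenta_le_of_linked hlinked P₁ P₂

theorem linked_diagram_value_bound_general (hD : IsAddFundamentalDomain Γ D μ) (hV : μ.real D ≠ 0)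
    (hP₁ : ∀ χ ∈ P₁, χ ∈ dualLattice Γ) (hP₂ : ∀ χ ∈ P₂, χ ∈ dualLattice Γ)
    (hg : ∀ γ ∈ Γ, Function.Periodic g γ) (hg_int : IntegrableOn g D μ)
    (hlinked : ∀ v, ∃ c, (diagramGraph k π τ).Reachable (0, c) v) (x₁ y₁ : E) :
    ‖∫ w : (Fin k → E) × (Fin k → E) in (Set.univ.pi fun _ ↦ D) ×ˢ (Set.univ.pi fun _ ↦ D),
        (∏ i : Fin (k + 1),
            densityKernel (μ.real D) P₁ (Fin.cases x₁ w.1 i - Fin.cases x₁ w.1 (π i))) *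
        (∏ j : Fin (k + 1),
            densityKernel (μ.real D) P₂ (Fin.cases y₁ w.2 j - Fin.cases y₁ w.2 (τ j))) *
        (∏ j : Fin k, g (w.1 j - w.2 j))
          ∂(Measure.pi fun _ ↦ μ).prod (Measure.pi fun _ ↦ μ)‖ ≤
      ((max P₁.card P₂.card : ℝ) / μ.real D) ^ 2 *
        ((max P₁.card P₂.card : ℝ) * (∫ x in D, ‖g x‖ ∂μ) / μ.real D) ^ k := by
  have hD_fin : μ D ≠ ⊤ := (ENNReal.toReal_ne_zero.1 hV).2
  rw [← Measure.prod_restrict, Measure.restrict_pi_pi]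
  simp only [diagramIntegrand_eq_sum]
  rw [integral_const_mul, integral_finsetSum, norm_mul]
  · have norm_prefactor : ‖((μ.real D : ℂ)⁻¹ ^ (k + 1)) ^ 2‖ = ((μ.real D)⁻¹ ^ (k + 1)) ^ 2 := by
      simp
    grw [norm_prefactor, norm_sum_integral_diagramTerm_le hD hD_fin hP₁ hP₂ hg hg_int hlinked]
    refine le_of_eq ?_
    simp only [mul_pow, div_pow, inv_pow]
    field_simp
    ring
  · intro s hs
    simp only [Finset.mem_product, Fintype.mem_piFinset] at hs
    exact integrable_diagramTerm hD hD_fin hg hg_int (fun i ↦ hP₁ _ (hs.1 i))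
      fun i ↦ hP₂ _ (hs.2 i)

end Diagrams

section Cube

open scoped Pointwise in
theorem isAddFundamentalDomain_congr_ae {G α : Type*} [AddGroup G] [Countable G] [AddAction G α]
    [MeasurableSpace α] [MeasurableConstVAdd G α] {μ : Measure α} [VAddInvariantMeasure G α μ]
    {s t : Set α} (hs : IsAddFundamentalDomain G s μ) (hst : s =ᵐ[μ] t) :
    IsAddFundamentalDomain G t μ where
  nullMeasurableSet := hs.nullMeasurableSet.congr hst
  ae_covers := by
    have mem_iff : ∀ᵐ x ∂μ, ∀ γ : G, γ +ᵥ x ∈ s ↔ γ +ᵥ x ∈ t := ae_all_iff.2 fun γ ↦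
      (measurePreserving_vadd γ μ).quasiMeasurePreserving.ae hst.mem_iff
    filter_upwards [mem_iff, hs.ae_covers] with x hx ⟨γ, hγ⟩
    exact ⟨γ, (hx γ).1 hγ⟩
  aedisjoint := fun _ _ hne ↦ (hs.aedisjoint hne).congr
    ((vadd_set_ae_eq _).2 hst.symm) ((vadd_set_ae_eq _).2 hst.symm)

variable (ι : Type*)

/-- The lattice `L ℤ^ι` of periods of the cube of side length `L`. -/
def cubeLattice [DecidableEq ι] (L : ℝ) : AddSubgroup (ι → ℝ) :=
  AddSubgroup.closure (Set.range fun j ↦ Pi.single j L)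

variable {ι} {L : ℝ}

theorem periodic_of_mem_cubeLattice [DecidableEq ι] {F : Type*} {f : (ι → ℝ) → F}
    (hf : ∀ x j, f (x + Pi.single j L) = f x) : ∀ γ ∈ cubeLattice ι L, Function.Periodic f γ := by
  intro γ hγ
  induction hγ using AddSubgroup.closure_induction with
  | mem _ h =>
    obtain ⟨j, rfl⟩ := h
    exact fun x ↦ hf x j
  | zero => exact fun x ↦ congrArg f (add_zero x)
  | add _ _ _ _ hx hy => exact hx.add_period hy
  | neg _ _ hx => exact hx.neg

instance [Countable ι] [DecidableEq ι] : Countable (cubeLattice ι L) := by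
  rw [cubeLattice, ← Submodule.span_int_eq_addSubgroupClosure]
  exact inferInstanceAs (Countable (Submodule.span ℤ (Set.range fun j : ι ↦ Pi.single j L)))

variable [Fintype ι]

theorem isAddFundamentalDomain_cube [DecidableEq ι] (hL : 0 < L) :
    IsAddFundamentalDomain (cubeLattice ι L) (Set.univ.pi fun _ : ι ↦ Set.Icc 0 L) volume := by
  let b : Module.Basis ι ℝ (ι → ℝ) := (Pi.basisFun ℝ ι).unitsSMul fun _ ↦ Units.mk0 L hL.ne'
  have lattice_eq : cubeLattice ι L = (Submodule.span ℤ (Set.range b)).toAddSubgroup := by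
    rw [Submodule.span_int_eq_addSubgroupClosure, cubeLattice]
    congr! with j
    ext i
    simp [b, Module.Basis.unitsSMul_apply, Pi.single_apply, Units.smul_def]
  have halfOpenCube : ZSpan.fundamentalDomain b = Set.univ.pi fun _ ↦ Set.Ico 0 L := by
    ext x
    simp [ZSpan.mem_fundamentalDomain, b, Module.Basis.repr_unitsSMul, Units.smul_def,
      inv_mul_eq_div, div_lt_one hL, le_div_iff₀ hL]
  refine isAddFundamentalDomain_congr_ae (s := ZSpan.fundamentalDomain b) ?_ ?_
  · rw [lattice_eq]
    exact ZSpan.isAddFundamentalDomain' b volume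
  · rw [halfOpenCube, Set.pi_univ_Icc]
    exact Measure.univ_pi_Ico_ae_eq_Icc

theorem measureReal_cube (hL : 0 ≤ L) :
    volume.real (Set.univ.pi fun _ : ι ↦ Set.Icc 0 L) = L ^ Fintype.card ι := by
  rw [measureReal_def, volume_pi_pi]
  simp [hL]

/-- The plane wave `x ↦ e^{i p·x}` with momentum `p`. -/
def planeWave (p : ι → ℝ) : AddChar (ι → ℝ) Circle :=
  Real.probChar.compAddMonoidHom (AddMonoidHom.mk' (p ⬝ᵥ ·) (dotProduct_add p))

theorem planeWave_apply (p x : ι → ℝ) : planeWave p x = Circle.exp (p ⬝ᵥ x) := by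
  ext
  simp [planeWave, Real.probChar_apply]

theorem planeWave_injective : Function.Injective (planeWave (ι := ι)) := by
  classical
  intro p q hpq
  ext j
  by_contra hne
  have hsub : p j - q j ≠ 0 := sub_ne_zero.2 hne
  have h := DFunLike.congr_fun hpq (Pi.single j (Real.pi / (p j - q j)))
  rw [planeWave_apply, planeWave_apply, ← div_eq_one, ← Circle.exp_sub, ← sub_dotProduct,
    dotProduct_single, Pi.sub_apply, mul_div_cancel₀ _ hsub] at h
  exact Circle.exp_pi_ne_one h

theorem planeWave_mem_dualLattice [DecidableEq ι] (hL : L ≠ 0) {p : ι → ℝ}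
    (hp : ∃ n : ι → ℤ, ∀ j, p j = 2 * Real.pi / L * n j) :
    planeWave p ∈ dualLattice (cubeLattice ι L) := by
  obtain ⟨n, hn⟩ := hp
  refine ⟨?_, fun γ hγ ↦ ?_⟩
  · simp only [planeWave_apply]
    fun_prop
  · have periodic : ∀ x j, planeWave p (x + Pi.single j L) = planeWave p x := fun x j ↦ by
      have phase : p ⬝ᵥ Pi.single j L = n j * (2 * Real.pi) := by
        rw [dotProduct_single, hn]
        field_simp
      rw [AddChar.map_add_eq_mul, planeWave_apply p (Pi.single j L), phase,
        Circle.exp_int_mul_two_pi, mul_one]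
    simpa using periodic_of_mem_cubeLattice periodic γ hγ 0

theorem mem_dualLattice_of_mem_map_planeWave [DecidableEq ι] (hL : L ≠ 0) {P : Finset (ι → ℝ)}
    (hP : ∀ p ∈ P, ∃ n : ι → ℤ, ∀ j, p j = 2 * Real.pi / L * n j) :
    ∀ χ ∈ P.map ⟨planeWave, planeWave_injective⟩, χ ∈ dualLattice (cubeLattice ι L) :=
  Finset.forall_mem_map.2 fun p hp ↦ planeWave_mem_dualLattice hL (hP p hp)

theorem gam_eq_densityKernel (L : ℝ) (P : Finset (Fin 3 → ℝ)) (x : Fin 3 → ℝ) :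
    gam L P x = densityKernel (L ^ 3) (P.map ⟨planeWave, planeWave_injective⟩) x := by
  simp [gam, densityKernel, planeWave_apply, dotProduct, mul_comm Complex.I]

end Cube

/-- Exact evaluation bound for the linked type-(B2) diagrams of the
Gaudin–Gillespie–Ripka expansion: if the diagram `(π, τ)` is linked (its graph is
connected), then the corresponding integral is bounded by `ρ² (ρ‖g‖₁)^k` with
`ρ = N/L³`, `N = max(|P₁|, |P₂|)`. -/
theorem linked_diagram_value_bound
    (L : ℝ) (hL : 0 < L)
    (P₁ P₂ : Finset (Fin 3 → ℝ))
    (hP₁ : ∀ p ∈ P₁, ∃ n : Fin 3 → ℤ, ∀ j, p j = 2 * Real.pi / L * n j)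
    (hP₂ : ∀ p ∈ P₂, ∃ n : Fin 3 → ℤ, ∀ j, p j = 2 * Real.pi / L * n j)
    (g : (Fin 3 → ℝ) → ℂ)
    (hg_meas : Measurable g)
    (hg_per : ∀ (x : Fin 3 → ℝ) (j : Fin 3), g (x + Pi.single j L) = g x)
    (hg_int : IntegrableOn g (box L))
    (k : ℕ) (hk : 1 ≤ k)
    (π τ : Equiv.Perm (Fin (k + 1)))
    (hlinked : (diagramGraph k π τ).Connected)
    (x₁ y₁ : Fin 3 → ℝ) :
    ‖∫ w : (Fin k → Fin 3 → ℝ) × (Fin k → Fin 3 → ℝ) in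
        (Set.univ.pi fun _ => box L) ×ˢ (Set.univ.pi fun _ => box L),
        (∏ i : Fin (k + 1),
            gam L P₁ (Fin.cases x₁ w.1 i - Fin.cases x₁ w.1 (π i))) *
        (∏ j : Fin (k + 1),
            gam L P₂ (Fin.cases y₁ w.2 j - Fin.cases y₁ w.2 (τ j))) *
        (∏ j : Fin k, g (w.1 j - w.2 j))‖
      ≤ ((max P₁.card P₂.card : ℝ) / L ^ 3) ^ 2 *
          ((max P₁.card P₂.card : ℝ) * (∫ x in box L, ‖g x‖) / L ^ 3) ^ k := by
  have volume_box : volume.real (box L) = L ^ 3 := measureReal_cube hL.le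
  simpa only [gam_eq_densityKernel, ← volume_box, Finset.card_map] using!
    linked_diagram_value_bound_general (isAddFundamentalDomain_cube hL)
      (volume_box.trans_ne (by positivity)) (mem_dualLattice_of_mem_map_planeWave hL.ne' hP₁)
      (mem_dualLattice_of_mem_map_planeWave hL.ne' hP₂) (periodic_of_mem_cubeLattice hg_per)
      hg_int (fun v ↦ ⟨false, hlinked.preconnected _ v⟩) x₁ y₁

end
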